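/- For every (f,T) ∈ 𝓒^1 × 𝓔^1, the set of invariant Borel probability measures of the restriction T|K(f,T) is exactly the set 𝓜_max(f,T) = {μ : μ is a T-invariant Borel probability measure with ∫ f dμ = β(f,T)} of maximizing measures of (f,T). -/

import Mathlib

/-!
A measure carried by `K(f,T)` is maximizing because, at a point of `Λ_{f,T,g}`, the Birkhoff sums
telescope to `S_n f = n β + g ∘ T^n - g`, so the averages converge to `β(f,T)` pointwise on
`K(f,T)`; invariance and dominated convergence give `∫ f = β` (`integral_eq_beta_of_Kset`).

Conversely, given one Lipschitz calibrated sub-action `g`, a maximizing measure has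
`∫ (g ∘ T + β - g - f) = 0` with nonnegative integrand, hence is carried by `E_{f,T,g}`, then by
`Λ*_{f,T,g}` and all its forward images, and so by `Λ_{f,T,g} ⊆ K(f,T)`
(`measure_Kset_of_maximizing`).

The remaining point is that a Lipschitz calibrated sub-action exists (`Gset_nonempty`). Let
`V n x` be the maximum of `S_n f` over the fibre `T^n y = x`. Expansion makes inverse branches
contract geometrically, so `V n` is Lipschitz with a constant independent of `n`
(`exists_shadow`). Therefore `V n` is additive in `n` up to a bounded error, Fekete's lemma gives
`V n = n c + O(1)`, and `g = limsup (V n - n c)` is calibrated with constant `c`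
(`exists_calibrated`). Finally `c = β(f,T)`: the sub-action inequality gives `β ≤ c`, and an
invariant measure with integral `c` is obtained from empirical measures on calibrated backward
orbits (`exists_invariant_of_average`).
-/

open MeasureTheory Topology Filter Set
open scoped UniformConvergence

noncomputable section

/-- The circle `ℝ/ℤ`. -/
abbrev Circle1 : Type := AddCircle (1 : ℝ)

/-- The canonical representative in `[0,1)` of a point of `ℝ/ℤ`. -/
noncomputable def rep (z : Circle1) : ℝ := (AddCircle.equivIco 1 0 z : ℝ)

/-- The circle map induced by a lift `F : ℝ → ℝ`. -/
noncomputable def cmap (F : ℝ → ℝ) : Circle1 → Circle1 := fun z => ((F (rep z) : ℝ) : Circle1)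

/-- The data determining the `C^r` topology: all derivatives of order `≤ r`, viewed in the
space of functions `ℝ → ℝ` with the uniform-convergence topology. -/
noncomputable def crSeq (r : ℕ∞) (f : ℝ → ℝ) : ℕ → (ℝ →ᵤ ℝ) :=
  fun k => UniformFun.ofFun (if (k : ℕ∞) ≤ r then iteratedDeriv k f else 0)

/-- The space `𝓒^r` of `C^r` functions `ℝ/ℤ → ℝ`. -/
def CrFun (r : ℕ∞) : Type := {f : Circle1 → ℝ // ContDiff ℝ r fun x : ℝ => f ↑x}

/-- The `C^r` topology on `𝓒^r`. -/
noncomputable instance (r : ℕ∞) : TopologicalSpace (CrFun r) :=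
  TopologicalSpace.induced (fun f : CrFun r => crSeq r fun x : ℝ => f.1 ↑x) inferInstance

/-- `F : ℝ → ℝ` is a lift of a `C^r` expanding circle map: it is `C^r`, sends `x+1` to
`F x + d` for a fixed integer `d`, and `|(Fⁿ)'| ≥ C λⁿ` for some `C > 0`, `λ > 1`. -/
def ExpandingLift (r : ℕ∞) (F : ℝ → ℝ) : Prop :=
  ContDiff ℝ r F ∧ (∃ d : ℤ, ∀ x : ℝ, F (x + 1) = F x + d) ∧
    ∃ C > (0 : ℝ), ∃ l > (1 : ℝ), ∀ n : ℕ, 1 ≤ n → ∀ x : ℝ, C * l ^ n ≤ |deriv (F^[n]) x|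

/-- The space `𝓔^r` of (lifts of) `C^r` expanding circle maps, with the `C^r` topology. -/
def ExpMap (r : ℕ∞) : Type := {F : ℝ → ℝ // ExpandingLift r F}

noncomputable instance (r : ℕ∞) : TopologicalSpace (ExpMap r) :=
  TopologicalSpace.induced (fun F : ExpMap r => crSeq r F.1) inferInstance

/-- `μ` is a `T`-invariant Borel probability measure. -/
def InvProb (T : Circle1 → Circle1) (μ : Measure Circle1) : Prop :=
  IsProbabilityMeasure μ ∧ μ.map T = μ

/-- `β(f,T)`, the maximal ergodic average. -/
noncomputable def beta (f : Circle1 → ℝ) (T : Circle1 → Circle1) : ℝ :=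
  sSup ((fun μ : Measure Circle1 => ∫ x, f x ∂μ) '' {μ | InvProb T μ})

/-- `μ` is a maximizing measure for `(f,T)`. -/
def IsMaximizing (f : Circle1 → ℝ) (T : Circle1 → Circle1) (μ : Measure Circle1) : Prop :=
  InvProb T μ ∧ ∫ x, f x ∂μ = beta f T

/-- `μ` is a periodic measure: an invariant measure supported on a periodic orbit. -/
def IsPeriodicMeasure (T : Circle1 → Circle1) (μ : Measure Circle1) : Prop :=
  InvProb T μ ∧ ∃ x : Circle1, ∃ n : ℕ, 0 < n ∧ T^[n] x = x ∧
    μ (Set.range fun k : ℕ => T^[k] x) = 1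

/-- `(f,T)` is uniquely maximized by a periodic measure. -/
def UniqMaxPeriodic (f : Circle1 → ℝ) (T : Circle1 → Circle1) : Prop :=
  ∃ μ : Measure Circle1, IsMaximizing f T μ ∧ IsPeriodicMeasure T μ ∧
    ∀ ν : Measure Circle1, IsMaximizing f T ν → ν = μ

/-- A (continuous) sub-action for `(f,T)`. -/
def IsSubaction (f : Circle1 → ℝ) (T : Circle1 → Circle1) (g : Circle1 → ℝ) : Prop :=
  Continuous g ∧ ∀ x, g x + f x ≤ g (T x) + beta f T

/-- A calibrated sub-action for `(f,T)`. -/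
def IsCalibrated (f : Circle1 → ℝ) (T : Circle1 → Circle1) (g : Circle1 → ℝ) : Prop :=
  IsSubaction f T g ∧ ∀ x, ∃ y, T y = x ∧ g y + f y = g x + beta f T

/-- `G_{f,T}`: the set of Lipschitz calibrated sub-actions of `(f,T)`. -/
def Gset (f : Circle1 → ℝ) (T : Circle1 → Circle1) : Set (Circle1 → ℝ) :=
  {g | (∃ K : NNReal, LipschitzWith K g) ∧ IsCalibrated f T g}

/-- The set `E_{f,T,g}`. -/
def Eset (f : Circle1 → ℝ) (T : Circle1 → Circle1) (g : Circle1 → ℝ) : Set Circle1 :=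
  {x | g x + f x = g (T x) + beta f T}

/-- The set `Λ*_{f,T,g}`. -/
def LambdaStar (f : Circle1 → ℝ) (T : Circle1 → Circle1) (g : Circle1 → ℝ) : Set Circle1 :=
  {x | ∀ n : ℕ, T^[n] x ∈ Eset f T g}

/-- The set `Λ_{f,T,g}`. -/
def Lambda (f : Circle1 → ℝ) (T : Circle1 → Circle1) (g : Circle1 → ℝ) : Set Circle1 :=
  ⋂ n : ℕ, T^[n] '' LambdaStar f T g

/-- The set `K(f,T)`. -/
def Kset (f : Circle1 → ℝ) (T : Circle1 → Circle1) : Set Circle1 :=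
  ⋃ g ∈ Gset f T, Lambda f T g

/-- The `(f,T)`-non-wandering set `Ω(f,T)`. -/
def OmegaSet (f : Circle1 → ℝ) (T : Circle1 → Circle1) : Set Circle1 :=
  {x | ∀ ε > (0 : ℝ), ∃ n : ℕ, 1 ≤ n ∧ ∃ z : Circle1, T^[n] z = x ∧ dist z x < ε ∧
    |∑ i ∈ Finset.range n, (f (T^[i] z) - beta f T)| < ε}

/-- `A` is a periodic orbit of `T`. -/
def IsPeriodicOrbit (T : Circle1 → Circle1) (A : Set Circle1) : Prop :=
  ∃ x : Circle1, (∃ n : ℕ, 0 < n ∧ T^[n] x = x) ∧ A = Set.range fun k : ℕ => T^[k] x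

/-- `A` is a `T`-minimal set: a nonempty compact invariant set with no proper nonempty
compact invariant subset. -/
def IsMinimalSet (T : Circle1 → Circle1) (A : Set Circle1) : Prop :=
  A.Nonempty ∧ IsCompact A ∧ T '' A ⊆ A ∧
    ∀ B ⊆ A, B.Nonempty → IsCompact B → T '' B ⊆ B → B = A

/-- The space of `C^r` families of functions on the circle with `q` parameters,
i.e. maps `(t,x) ↦ f_t(x)` that are jointly `C^r` (the circle variable via a lift). -/
def FamFun (r : ℕ∞) (q : ℕ) : Type :=
  {G : ((Fin q → ℝ) × ℝ) → ℝ // ContDiff ℝ r G ∧ ∀ t x, G (t, x + 1) = G (t, x)}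

noncomputable def famSeq (r : ℕ∞) (q : ℕ) (G : ((Fin q → ℝ) × ℝ) → ℝ) :
    (k : ℕ) → (((Fin q → ℝ) × ℝ) →ᵤ (((Fin q → ℝ) × ℝ) [×k]→L[ℝ] ℝ)) :=
  fun k => UniformFun.ofFun (if (k : ℕ∞) ≤ r then iteratedFDeriv ℝ k G else 0)

/-- The `C^r` topology on the space of `C^r` families. -/
noncomputable instance (r : ℕ∞) (q : ℕ) : TopologicalSpace (FamFun r q) :=
  TopologicalSpace.induced (fun G : FamFun r q => famSeq r q G.1) inferInstance

/-- The member `f_t : ℝ/ℤ → ℝ` of a family, at the parameter `t`. -/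
noncomputable def famMem {r : ℕ∞} {q : ℕ} (G : FamFun r q) (t : Fin q → ℝ) : Circle1 → ℝ :=
  fun z => G.1 (t, rep z)

/-- The product `m_∞` over `ℕ` of Lebesgue measure on `[0,1]`, realised as the pushforward of
the Haar probability measure of the compact group `(ℝ/ℤ)^ℕ` under the coordinatewise choice of
representatives in `[0,1)`. -/
noncomputable def mInfty : Measure (ℕ → ℝ) :=
  Measure.map (fun (t : ℕ → Circle1) (n : ℕ) => rep (t n))
    (MeasureTheory.Measure.addHaarMeasure (⊤ : TopologicalSpace.PositiveCompacts (ℕ → Circle1)))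

/-- `S` is an `N`-dimensionally shy subset of a normed real vector space `V`. -/
def NDimShy {V : Type*} [NormedAddCommGroup V] [NormedSpace ℝ V] (N : ℕ) (S : Set V) : Prop :=
  ∃ φ : Fin N → V, ∀ f : V,
    volume {t : Fin N → ℝ | (∀ i, t i ∈ Set.Icc (0 : ℝ) 1) ∧ f + ∑ i, t i • φ i ∈ S} = 0

/-- `S` is a finite dimensionally shy subset of a normed real vector space `V`. -/
def FinDimShy {V : Type*} [NormedAddCommGroup V] [NormedSpace ℝ V] (S : Set V) : Prop :=
  ∃ N : ℕ, 0 < N ∧ NDimShy N S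

/-- `S` is a shy subset of `V`: there are a compactly supported Borel probability measure `μ`
on `V` and a Borel set `S̃ ⊇ S` all of whose translates are `μ`-null. -/
def IsShy {V : Type*} [NormedAddCommGroup V] [NormedSpace ℝ V] (S : Set V) : Prop :=
  letI : MeasurableSpace V := borel V
  ∃ μ : Measure V, μ Set.univ = 1 ∧ (∃ K : Set V, IsCompact K ∧ μ K = 1) ∧
    ∃ St : Set V, MeasurableSet St ∧ S ⊆ St ∧
      ∀ v : V, μ ((fun x => x + v) ⁻¹' St) = 0

/-- `S` is a prevalent subset of `V`. -/
def IsPrevalent {V : Type*} [NormedAddCommGroup V] [NormedSpace ℝ V] (S : Set V) : Prop :=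
  IsShy Sᶜ

/-- `F` is the (normalized) lift of an orientation-preserving real analytic expanding circle
map of degree `d` fixing `π(0)`. -/
def AnalyticExpandingLift (F : ℝ → ℝ) (d : ℕ) : Prop :=
  (∀ x : ℝ, AnalyticAt ℝ F x) ∧ (∀ x : ℝ, F (x + 1) = F x + d) ∧ StrictMono F ∧ F 0 = 0 ∧
    2 ≤ d ∧ ∃ C > (0 : ℝ), ∃ l > (1 : ℝ), ∀ n : ℕ, 1 ≤ n → ∀ x : ℝ, C * l ^ n ≤ |deriv (F^[n]) x|

/-- The inverse branches `τ_{i,n} = τ_{i_n} ∘ ⋯ ∘ τ_{i_1}`, where `τ = F⁻¹` and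
`τ_i(x) = τ(x+i)`; the word `i` is indexed from `0`, so `i 0` is the first letter `i_1`. -/
noncomputable def tauIter (F : ℝ → ℝ) {d : ℕ} (i : ℕ → Fin d) : ℕ → ℝ → ℝ
  | 0, x => x
  | n + 1, x => Function.invFun F (tauIter F i n x + ((i n : ℕ) : ℝ))

/-- The function `h^f_i` associated to an infinite word `i`. -/
noncomputable def hSum (F : ℝ → ℝ) {d : ℕ} (i : ℕ → Fin d) (f : Circle1 → ℝ) : ℝ → ℝ :=
  fun x => ∑' n : ℕ,
    (f ((tauIter F i (n + 1) x : ℝ) : Circle1) - f ((tauIter F i (n + 1) 0 : ℝ) : Circle1))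

/-- The function `h^f_i` associated to a finite word of length `m` (the first `m` letters
of `i`). -/
noncomputable def hSumFin (F : ℝ → ℝ) {d : ℕ} (i : ℕ → Fin d) (m : ℕ) (f : Circle1 → ℝ) :
    ℝ → ℝ :=
  fun x => ∑ n ∈ Finset.range m,
    (f ((tauIter F i (n + 1) x : ℝ) : Circle1) - f ((tauIter F i (n + 1) 0 : ℝ) : Circle1))

/-- `i ∈ CL(x,K)`: all backward images of `x` along the word `i` lie over `K`. -/
def WordIn (F : ℝ → ℝ) {d : ℕ} (i : ℕ → Fin d) (x : ℝ) (K : Set Circle1) : Prop :=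
  ∀ n : ℕ, 1 ≤ n → ((tauIter F i n x : ℝ) : Circle1) ∈ K

/-- `x` (a real, lying over `K`) is an `f`-supercritical value of `K`. -/
def IsSupercriticalValue (F : ℝ → ℝ) (d : ℕ) (f : Circle1 → ℝ) (K : Set Circle1) (x : ℝ) :
    Prop :=
  ((x : ℝ) : Circle1) ∈ K ∧ ∃ i j : ℕ → Fin d, WordIn F i x K ∧ WordIn F j x K ∧ i 0 ≠ j 0 ∧
    deriv (hSum F i f) x = deriv (hSum F j f) x

/-- `x` is a critical value of `T|K`. -/
def IsCriticalValue (T : Circle1 → Circle1) (K : Set Circle1) (x : Circle1) : Prop :=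
  x ∈ K ∧ ∃ y z, y ∈ K ∧ z ∈ K ∧ y ≠ z ∧ T y = x ∧ T z = x

/-- A critical value `x` of `T|K` is regular: on each side of `x` there is a continuous
inverse branch of `T` selecting the unique preimage in `K`. -/
def IsRegularCriticalValue (T : Circle1 → Circle1) (K : Set Circle1) (x : Circle1) : Prop :=
  ∃ U : Set Circle1, U ∈ 𝓝 x ∧ IsConnected U ∧
    ∀ b ∈ U \ {x}, ∃ s : Circle1 → Circle1,
      ContinuousOn s (connectedComponentIn (U \ {x}) b) ∧
      (∀ y ∈ connectedComponentIn (U \ {x}) b, T (s y) = y) ∧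
      (∀ y ∈ K ∩ connectedComponentIn (U \ {x}) b, T ⁻¹' {y} ∩ K = {s y})

/-- `T|K` is Sturmian-like: every critical value is regular. -/
def SturmianLike (T : Circle1 → Circle1) (K : Set Circle1) : Prop :=
  ∀ x, IsCriticalValue T K x → IsRegularCriticalValue T K x

/-- `f : ℝ/ℤ → ℝ` is a trigonometric polynomial. -/
def IsTrigPoly (f : Circle1 → ℝ) : Prop :=
  ∃ m : ℕ, ∃ a b : ℕ → ℝ, ∀ x : ℝ,
    f ↑x = a 0 + ∑ k ∈ Finset.range m,
      (a (k + 1) * Real.cos (2 * Real.pi * (k + 1) * x) +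
        b (k + 1) * Real.sin (2 * Real.pi * (k + 1) * x))

end

/-! ### Invariant measures from orbit averages -/

/-- Krylov–Bogolyubov: a weak-* limit of the empirical measures along the orbit segments
`z n, …, T^n (z n)` is invariant, and integrates `f` to the limit of the Birkhoff averages. -/
theorem exists_invariant_of_average {X : Type*} [MetricSpace X] [CompactSpace X]
    [MeasurableSpace X] [BorelSpace X] {T : X → X} (hT : Continuous T) {f : X → ℝ}
    (hf : Continuous f) {z : ℕ → X} {c : ℝ}
    (hz : Tendsto (fun n : ℕ => ((n : ℝ) + 1)⁻¹ * birkhoffSum T f (n + 1) (z n)) atTop (𝓝 c)) :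
    ∃ μ : Measure X, IsProbabilityMeasure μ ∧ μ.map T = μ ∧ ∫ x, f x ∂μ = c := by
  classical
  have hpos : ∀ n : ℕ, (0 : ℝ) < (n : ℝ) + 1 := fun n => by positivity
  -- the empirical measure of the orbit segment of length `n + 1` starting at `z n`
  let m : ℕ → Measure X := fun n =>
    (ENNReal.ofReal ((n : ℝ) + 1)⁻¹) •
      ∑ k ∈ Finset.range (n + 1), Measure.dirac (T^[k] (z n))
  have hm : ∀ n, IsProbabilityMeasure (m n) := by
    intro n
    constructor
    simp only [m, Measure.smul_apply, Measure.finsetSum_apply, measure_univ, Finset.sum_const,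
      Finset.card_range, smul_eq_mul, nsmul_eq_mul, mul_one]
    rw [ENNReal.ofReal_inv_of_pos (hpos n), ENNReal.ofReal_add (by positivity) (by positivity)]
    simp only [ENNReal.ofReal_natCast, ENNReal.ofReal_one, Nat.cast_add, Nat.cast_one]
    exact ENNReal.inv_mul_cancel (by simp) (by simp)
  have hint : ∀ (φ : X → ℝ), Continuous φ → ∀ n,
      ∫ x, φ x ∂(m n) = ((n : ℝ) + 1)⁻¹ * birkhoffSum T φ (n + 1) (z n) := by
    intro φ hφ n
    simp only [m]
    rw [integral_smul_measure, integral_finsetSum_measure]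
    · simp only [integral_dirac, birkhoffSum, smul_eq_mul]
      rw [ENNReal.toReal_ofReal (by positivity)]
    · intro i _
      exact (hφ.integrable_of_hasCompactSupport (HasCompactSupport.of_compactSpace φ))
  let p : ℕ → ProbabilityMeasure X := fun n => ⟨m n, hm n⟩
  obtain ⟨P, -, hP⟩ := isCompact_univ.ultrafilter_le_nhds
    ((hyperfilter ℕ : Ultrafilter ℕ).map p) (by simp)
  have hP' : Tendsto p (hyperfilter ℕ : Filter ℕ) (𝓝 P) := hP
  rw [ProbabilityMeasure.tendsto_iff_forall_integral_tendsto] at hP'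
  have hle : (hyperfilter ℕ : Filter ℕ) ≤ atTop := Nat.hyperfilter_le_atTop
  have hlim : ∀ φ : C(X, ℝ), Tendsto
      (fun n : ℕ => ((n : ℝ) + 1)⁻¹ * birkhoffSum T φ (n + 1) (z n))
      (hyperfilter ℕ : Filter ℕ) (𝓝 (∫ x, φ x ∂(P : Measure X))) := by
    intro φ
    have := hP' (BoundedContinuousFunction.mkOfCompact φ)
    refine this.congr fun n => ?_
    exact hint φ φ.continuous n
  refine ⟨P, inferInstance, ?_, ?_⟩
  · have : IsProbabilityMeasure ((P : Measure X).map T) :=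
      Measure.isProbabilityMeasure_map hT.aemeasurable
    refine ext_of_forall_integral_eq_of_IsFiniteMeasure fun φ => ?_
    rw [integral_map hT.aemeasurable φ.continuous.aestronglyMeasurable]
    have h1 := hlim ⟨φ, φ.continuous⟩
    have h2 := hlim ⟨fun x => φ (T x), φ.continuous.comp hT⟩
    simp only [ContinuousMap.coe_mk] at h1 h2
    -- the averages of `φ` and `φ ∘ T` differ by a telescoping boundary term, which vanishes
    have h3 : Tendsto (fun n : ℕ => ((n : ℝ) + 1)⁻¹ * (φ (T^[n+1] (z n)) - φ (z n)))
        atTop (𝓝 0) := by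
      have hinv : Tendsto (fun n : ℕ => ((n : ℝ) + 1)⁻¹ * (2 * ‖φ‖)) atTop (𝓝 0) := by
        have := (tendsto_one_div_add_atTop_nhds_zero_nat (𝕜 := ℝ)).mul_const (2 * ‖φ‖)
        simpa using this
      refine squeeze_zero_norm (fun n => ?_) hinv
      rw [norm_mul, Real.norm_of_nonneg (inv_nonneg.2 (hpos n).le)]
      gcongr
      have a := φ.norm_coe_le_norm (T^[n+1] (z n))
      have b := φ.norm_coe_le_norm (z n)
      linarith [norm_sub_le (φ (T^[n+1] (z n))) (φ (z n))]
    have h4 := h1.add (h3.mono_left hle)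
    rw [add_zero] at h4
    refine tendsto_nhds_unique h2 (h4.congr fun n => ?_)
    have e1 : birkhoffSum T (fun x => φ (T x)) (n+1) (z n) = birkhoffSum T φ (n+1) (T (z n)) := by
      simp only [birkhoffSum, ← Function.iterate_succ_apply, ← Function.iterate_succ_apply']
    have e2 := birkhoffSum_apply_sub_birkhoffSum T φ (n+1) (z n)
    rw [e1, ← e2]; ring
  · exact tendsto_nhds_unique (hlim ⟨f, hf⟩) (hz.mono_left hle)


/-! ### Calibrated sub-actions from maximal Birkhoff sums over fibres -/

/-- The supremum of the Birkhoff sums `f(y) + f(T y) + ⋯ + f(T^{n-1} y)` over the fibre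
`T^n y = x`, that is, the `n`-th iterate of the Lax–Oleinik operator applied to `0`. The value is
meaningful only where the fibre is nonempty and the sums are bounded above. -/
noncomputable def fiberSup {X : Type*} (T : X → X) (f : X → ℝ) (n : ℕ) (x : X) : ℝ :=
  sSup (birkhoffSum T f n '' (T^[n] ⁻¹' {x}))

theorem le_fiberSup {X : Type*} [MetricSpace X] [CompactSpace X] {T : X → X}
    {f : X → ℝ} (hf : Continuous f) (n : ℕ) (y : X) :
    birkhoffSum T f n y ≤ fiberSup T f n (T^[n] y) := by
  obtain ⟨B, hB⟩ := isCompact_univ.bddAbove_image hf.continuousOn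
  refine le_csSup ⟨n * B, ?_⟩ ⟨y, rfl, rfl⟩
  rintro _ ⟨w, -, rfl⟩
  calc birkhoffSum T f n w ≤ ∑ k ∈ Finset.range n, B :=
        Finset.sum_le_sum fun k _ => hB ⟨_, mem_univ _, rfl⟩
    _ = n * B := by simp

theorem fiberSup_le {X : Type*} {T : X → X} (hs : Function.Surjective T)
    {f : X → ℝ} {n : ℕ} {x : X} {b : ℝ}
    (h : ∀ y, T^[n] y = x → birkhoffSum T f n y ≤ b) : fiberSup T f n x ≤ b := by
  obtain ⟨y, hy⟩ := hs.iterate n x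
  refine csSup_le ⟨_, y, hy, rfl⟩ ?_
  rintro _ ⟨w, hw, rfl⟩
  exact h w hw

/-- If Birkhoff sums over fibres of `T^n` are comparable with Lipschitz constant `D` independent
of `n` (hypothesis `hD`), then `(f,T)` has a `D`-Lipschitz calibrated sub-action for some
constant `c`. It is `g = limsup (fiberSup T f n - n c)`, where `c` is the growth rate of
`fiberSup T f n`; finiteness of the fibres lets the limsup commute with the maximum over
preimages. -/
theorem exists_calibrated {X : Type*} [MetricSpace X] [CompactSpace X] {T : X → X}
    (hs : Function.Surjective T) (hfin : ∀ x, (T ⁻¹' {x}).Finite) {f : X → ℝ} (hf : Continuous f) (x₀ : X) {D : NNReal}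
    (hD : ∀ n x x' y, T^[n] y = x → ∃ y', T^[n] y' = x' ∧
      birkhoffSum T f n y ≤ birkhoffSum T f n y' + D * dist x x') :
    ∃ (c : ℝ) (g : X → ℝ), LipschitzWith D g ∧ (∀ x, g x + f x ≤ g (T x) + c) ∧
      ∀ x, ∃ y, T y = x ∧ g y + f y = g x + c := by
  set V := fiberSup T f with hV
  have hLip : ∀ n x x', V n x ≤ V n x' + D * dist x x' := by
    intro n x x'
    refine fiberSup_le hs fun y hy => ?_
    obtain ⟨y', h1, h2⟩ := hD n x x' y hy
    have := le_fiberSup (T := T) hf n y'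
    rw [h1] at this
    linarith
  set E : ℝ := D * Metric.diam (univ : Set X) with hE
  have hosc : ∀ n x x', V n x ≤ V n x' + E := by
    intro n x x'
    refine (hLip n x x').trans ?_
    have : dist x x' ≤ Metric.diam (univ : Set X) :=
      Metric.dist_le_diam_of_mem isCompact_univ.isBounded (mem_univ _) (mem_univ _)
    rw [hE]
    gcongr
  have hE0 : 0 ≤ E := mul_nonneg D.2 Metric.diam_nonneg
  -- `V n x₀` is additive in `n` up to the bounded error `E`
  have hupper : ∀ m n, V (m + n) x₀ ≤ V m x₀ + V n x₀ + E := by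
    intro m n
    refine fiberSup_le hs fun y hy => ?_
    rw [birkhoffSum_add]
    have h1 := le_fiberSup (T := T) hf m y
    have h2 := le_fiberSup (T := T) hf n (T^[m] y)
    rw [← Function.iterate_add_apply, add_comm n m, hy] at h2
    have := hosc m (T^[m] y) x₀
    linarith
  have hlower : ∀ m n, V m x₀ + V n x₀ - E ≤ V (m + n) x₀ := by
    intro m n
    have : V n x₀ ≤ V (m + n) x₀ - V m x₀ + E := by
      refine fiberSup_le hs fun y hy => ?_
      have : V m y ≤ V (m + n) x₀ - birkhoffSum T f n y := by
        refine fiberSup_le hs fun w hw => ?_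
        have := le_fiberSup (T := T) hf (m + n) w
        rw [birkhoffSum_add, hw, add_comm m n, Function.iterate_add_apply, hw, hy,
          add_comm n m] at this
        linarith
      have := hosc m x₀ y
      linarith
    linarith
  -- Fekete's lemma for `V n x₀ + E` and `-V n x₀ + E` gives `V n x₀ = n c + O(1)`
  obtain ⟨c, hc⟩ : ∃ c : ℝ, ∀ n : ℕ, n * c ≤ V n x₀ + E ∧ V n x₀ ≤ n * c + E := by
    obtain ⟨B, hB⟩ := isCompact_univ.exists_bound_of_continuousOn hf.continuousOn
    have hB' : ∀ n y, |birkhoffSum T f n y| ≤ n * B := by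
      intro n y
      calc |birkhoffSum T f n y| ≤ ∑ k ∈ Finset.range n, |f (T^[k] y)| :=
            Finset.abs_sum_le_sum_abs _ _
        _ ≤ ∑ k ∈ Finset.range n, B := Finset.sum_le_sum fun k _ => hB _ (mem_univ _)
        _ = n * B := by simp
    have hVB : ∀ n : ℕ, |V n x₀| ≤ n * B := by
      intro n
      obtain ⟨y, hy⟩ := hs.iterate n x₀
      refine abs_le.2 ⟨?_, fiberSup_le hs fun y hy => (abs_le.1 (hB' n y)).2⟩
      have := le_fiberSup (T := T) hf n y
      rw [hy] at this
      linarith [(abs_le.1 (hB' n y)).1]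
    have hB0 : 0 ≤ B := (norm_nonneg _).trans (hB x₀ (mem_univ _))
    have ha : Subadditive fun n => V n x₀ + E := fun m n => by linarith [hupper m n]
    have hb : Subadditive fun n => -V n x₀ + E := fun m n => by linarith [hlower m n]
    have hbd : ∀ u : ℕ → ℝ, (∀ n, -(n * B) ≤ u n) → BddBelow (range fun n : ℕ => u n / n) := by
      intro u hu
      refine ⟨-B, ?_⟩
      rintro _ ⟨n, rfl⟩
      rcases Nat.eq_zero_or_pos n with rfl | hn
      · simpa using hB0
      · have : (0 : ℝ) < n := by exact_mod_cast hn
        simp only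
        rw [le_div_iff₀ this]
        linarith [hu n]
    have hba := hbd _ fun n => by
      show -(n * B) ≤ V n x₀ + E
      linarith [(abs_le.1 (hVB n)).1]
    have hbb := hbd _ fun n => by
      show -(n * B) ≤ -V n x₀ + E
      linarith [(abs_le.1 (hVB n)).2]
    have hsum : ha.lim + hb.lim = 0 := by
      refine tendsto_nhds_unique ((ha.tendsto_lim hba).add (hb.tendsto_lim hbb)) ?_
      have : Tendsto (fun n : ℕ => (2 * E) / (n : ℝ)) atTop (𝓝 0) :=
        tendsto_const_div_atTop_nhds_zero_nat _
      refine this.congr fun n => ?_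
      ring
    refine ⟨ha.lim, fun n => ?_⟩
    rcases Nat.eq_zero_or_pos n with rfl | hn
    · have h0 := hVB 0
      simp only [Nat.cast_zero, zero_mul, abs_nonpos_iff] at h0
      simp [h0, hE0]
    · have hn' : (0 : ℝ) < n := by exact_mod_cast hn
      have h1 := ha.lim_le_div hba hn.ne'
      have h2 := hb.lim_le_div hbb hn.ne'
      rw [le_div_iff₀ hn'] at h1 h2
      have h3 : hb.lim = -ha.lim := by linarith
      rw [h3] at h2
      constructor <;> linarith
  set W : ℕ → X → ℝ := fun n x => V n x - n * c with hW
  have hWb : ∀ x n, |W n x| ≤ 2 * E := by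
    intro x n
    have := hosc n x x₀
    have := hosc n x₀ x
    have := hc n
    simp only [hW]
    rw [abs_le]
    constructor <;> linarith
  have hbu : ∀ x, IsBoundedUnder (· ≤ ·) atTop fun n => W n x := fun x =>
    isBoundedUnder_of ⟨2 * E, fun n => (abs_le.1 (hWb x n)).2⟩
  have hbl : ∀ x, IsBoundedUnder (· ≥ ·) atTop fun n => W n x := fun x =>
    isBoundedUnder_of ⟨-(2 * E), fun n => (abs_le.1 (hWb x n)).1⟩
  set g : X → ℝ := fun x => limsup (fun n => W n x) atTop with hg
  have hlt : ∀ x (ε : ℝ), 0 < ε → ∀ᶠ n in atTop, W n x < g x + ε := fun x ε hε =>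
    eventually_lt_of_limsup_lt (by simp only [hg]; linarith) (hbu x)
  have hgle : ∀ x b, (∀ᶠ n in atTop, W (n + 1) x ≤ b) → g x ≤ b := by
    intro x b h
    refine limsup_le_of_le (hbl x).isCoboundedUnder_le ?_
    obtain ⟨N, hN⟩ := eventually_atTop.1 h
    refine eventually_atTop.2 ⟨N + 1, fun n hn => ?_⟩
    obtain ⟨k, rfl⟩ := Nat.exists_eq_add_of_le' (show 1 ≤ n by omega)
    exact hN k (by omega)
  have hstep : ∀ n y, W n y + f y ≤ W (n + 1) (T y) + c := by
    intro n y
    have : V n y ≤ V (n + 1) (T y) - f y := by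
      refine fiberSup_le hs fun w hw => ?_
      have := le_fiberSup (T := T) hf (n + 1) w
      rw [birkhoffSum_succ, hw, Function.iterate_succ_apply', hw] at this
      linarith
    simp only [hW]
    push_cast
    linarith
  have hsub : ∀ x, g x + f x ≤ g (T x) + c := by
    intro x
    refine le_of_forall_pos_le_add fun ε hε => ?_
    have := (tendsto_add_atTop_nat 1).eventually (hlt (T x) ε hε)
    have h2 : g x ≤ g (T x) + c + ε - f x := by
      refine limsup_le_of_le (hbl x).isCoboundedUnder_le ?_
      filter_upwards [this] with n hn
      linarith [hstep n x]
    linarith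
  refine ⟨c, g, ?_, hsub, ?_⟩
  · refine LipschitzWith.of_le_add_mul D fun x x' => ?_
    refine le_of_forall_pos_le_add fun ε hε => ?_
    refine limsup_le_of_le (hbl x).isCoboundedUnder_le ?_
    filter_upwards [hlt x' ε hε] with n hn
    have := hLip n x x'
    simp only [hW] at hn ⊢
    linarith
  · intro x
    obtain ⟨y₀, hy₀, hmax⟩ := (hfin x).exists_maximalFor (fun y => g y + f y) _ (hs x)
    have hmax' : ∀ y, T y = x → g y + f y ≤ g y₀ + f y₀ := fun y hy => by
      by_contra! h
      exact absurd (hmax hy h.le) (not_le.2 h)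
    refine ⟨y₀, hy₀, le_antisymm (by simpa only [show T y₀ = x from hy₀] using hsub y₀) ?_⟩
    refine le_of_forall_pos_le_add fun ε hε => ?_
    have hall : ∀ᶠ n in atTop, ∀ y ∈ T ⁻¹' {x}, W n y < g y + ε :=
      (eventually_all_finite (hfin x)).2 fun y _ => hlt y ε hε
    suffices g x ≤ g y₀ + f y₀ + ε - c by linarith
    refine hgle x _ ?_
    filter_upwards [hall] with n hn
    have : V (n + 1) x ≤ g y₀ + f y₀ + ε + n * c := by
      refine fiberSup_le hs fun w hw => ?_
      rw [Function.iterate_succ_apply'] at hw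
      have h1 := hn (T^[n] w) hw
      have h2 := hmax' _ hw
      have h3 := le_fiberSup (T := T) hf n w
      rw [birkhoffSum_succ]
      simp only [hW] at h1
      linarith
    simp only [hW]
    push_cast
    linarith

/-! ### Circle maps and their lifts -/

theorem coe_rep (z : Circle1) : ((rep z : ℝ) : Circle1) = z := AddCircle.coe_equivIco

theorem circle_coe_eq_iff {s t : ℝ} : (s : Circle1) = t ↔ ∃ m : ℤ, s = t + m := by
  rw [← sub_eq_zero, ← AddCircle.coe_sub, AddCircle.coe_eq_zero_iff]
  constructor
  · rintro ⟨m, hm⟩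
    exact ⟨m, by simp at hm; linarith⟩
  · rintro ⟨m, hm⟩
    exact ⟨m, by simp; linarith⟩

theorem lift_add_int {F : ℝ → ℝ} {d : ℤ} (h : ∀ x, F (x + 1) = F x + d) (x : ℝ) (m : ℤ) :
    F (x + m) = F x + m * d := by
  induction m with
  | zero => simp
  | succ n ih =>
    have := h (x + n)
    push_cast at ih ⊢
    rw [← add_assoc, this, ih]; ring
  | pred n ih =>
    have := h (x + (-n - 1))
    push_cast at ih ⊢
    rw [show x + (-(n : ℝ) - 1) + 1 = x + -n by ring, ih] at this
    linarith

theorem cmap_coe {F : ℝ → ℝ} {d : ℤ} (h : ∀ x, F (x + 1) = F x + d) (t : ℝ) :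
    cmap F (t : Circle1) = (F t : Circle1) := by
  obtain ⟨m, hm⟩ := circle_coe_eq_iff.1 (coe_rep (t : Circle1))
  refine circle_coe_eq_iff.2 ⟨m * d, ?_⟩
  rw [hm, lift_add_int h]
  push_cast
  ring

theorem cmap_iterate_coe {F : ℝ → ℝ} {d : ℤ} (h : ∀ x, F (x + 1) = F x + d) (n : ℕ) (t : ℝ) :
    (cmap F)^[n] (t : Circle1) = (F^[n] t : ℝ) := by
  induction n with
  | zero => rfl
  | succ n ih => rw [Function.iterate_succ_apply', ih, cmap_coe h, Function.iterate_succ_apply']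

theorem continuous_cmap {F : ℝ → ℝ} {d : ℤ} (h : ∀ x, F (x + 1) = F x + d) (hF : Continuous F) :
    Continuous (cmap F) := by
  refine (QuotientAddGroup.isQuotientMap_mk
    (N := AddSubgroup.zmultiples (1 : ℝ))).continuous_iff.2 ?_
  have : cmap F ∘ (QuotientAddGroup.mk : ℝ → Circle1) = fun t => (F t : Circle1) :=
    funext fun t => cmap_coe h t
  exact this ▸ (AddCircle.continuous_mk' (1 : ℝ)).comp hF

theorem mul_abs_sub_le {G : ℝ → ℝ} (hG : Differentiable ℝ G) {a : ℝ}
    (ha : ∀ x, a ≤ |deriv G x|) (u v : ℝ) : a * |u - v| ≤ |G u - G v| := by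
  wlog huv : u < v generalizing u v
  · rcases eq_or_lt_of_le (not_lt.1 huv) with rfl | h
    · simp
    · rw [abs_sub_comm u, abs_sub_comm (G u)]
      exact this v u h
  obtain ⟨w, -, hw⟩ := exists_deriv_eq_slope G huv hG.continuous.continuousOn
    (hG.differentiableOn)
  have h := ha w
  have hpos : 0 < v - u := sub_pos.2 huv
  rw [hw, abs_div, abs_of_pos hpos, le_div_iff₀ hpos] at h
  rwa [abs_sub_comm u, abs_sub_comm (G u), abs_of_pos hpos]

theorem lift_injective {F : ℝ → ℝ} (hF : Differentiable ℝ F) {a : ℝ} (h0 : 0 < a)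
    (ha : ∀ x, a ≤ |deriv F x|) : Function.Injective F := by
  intro u v huv
  have := mul_abs_sub_le hF ha u v
  simp only [huv, sub_self, abs_zero] at this
  exact sub_eq_zero.1 (abs_nonpos_iff.1 (nonpos_of_mul_nonpos_right this h0))

theorem lift_surjective {F : ℝ → ℝ} {d : ℤ} (h : ∀ x, F (x + 1) = F x + d) (hF : Continuous F)
    (hinj : Function.Injective F) : Function.Surjective F := by
  -- degree `0` would give `F 1 = F 0`
  have hd : d ≠ 0 := by
    rintro rfl
    have := hinj (a₁ := 0 + 1) (a₂ := 0) (by simpa using h 0)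
    norm_num at this
  have hd2 : (1 : ℝ) ≤ (d : ℝ) * d := by
    have : 1 ≤ d * d := Int.add_one_le_iff.2 (mul_self_pos.2 hd)
    exact_mod_cast this
  intro y
  -- `F (± N d) = F 0 ± N d²`, so the values at these two points enclose `y` for large `N`
  obtain ⟨N, hN⟩ := exists_nat_ge |y - F 0|
  have hN' : (N : ℝ) ≤ N * (d * d) := le_mul_of_one_le_right (by positivity) hd2
  have hy := abs_le.1 hN
  have h1 := lift_add_int h 0 (N * d)
  have h2 := lift_add_int h 0 (-(N * d))
  push_cast at h1 h2
  exact mem_range_of_exists_le_of_exists_ge hF ⟨_, h2.le.trans (by linarith)⟩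
    ⟨_, le_trans (by linarith) h1.ge⟩

/-- A preimage `z` of `x` satisfies `F (rep z) = rep x + m` for an integer `m`; `m` is bounded
because `F` is bounded on `[0,1]`, and it determines `z` because `F` is injective. -/
theorem cmap_fiber_finite {F : ℝ → ℝ} (hF : Continuous F) (hinj : Function.Injective F)
    (x : Circle1) : (cmap F ⁻¹' {x}).Finite := by
  obtain ⟨B, hB⟩ := (isCompact_Icc (a := (0 : ℝ)) (b := 1)).exists_bound_of_continuousOn
    hF.continuousOn
  have hfin : ((fun m : ℤ => rep x + (m : ℝ)) '' (Icc ⌈-B - rep x⌉ ⌊B - rep x⌋)).Finite :=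
    (finite_Icc _ _).image _
  have hpre := hfin.preimage (f := fun z : Circle1 => F (rep z)) (by
    intro z _ w _ hzw
    have := hinj hzw
    rw [← coe_rep z, ← coe_rep w, this])
  refine hpre.subset fun z hz => ?_
  have hz' : ((F (rep z) : ℝ) : Circle1) = (rep x : ℝ) := by
    rw [coe_rep]; exact hz
  obtain ⟨m, hm⟩ := circle_coe_eq_iff.1 hz'
  refine ⟨m, ⟨Int.ceil_le.2 ?_, Int.le_floor.2 ?_⟩, hm.symm⟩ <;>
  · have hr : rep z ∈ Ico (0 : ℝ) (0 + 1) := (AddCircle.equivIco 1 0 z).2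
    have := abs_le.1 (hB (rep z) ⟨hr.1, by linarith [hr.2]⟩)
    linarith

theorem exists_lipschitz_lift {φ : ℝ → ℝ} (hφ : ContDiff ℝ 1 φ) (hp : ∀ x, φ (x + 1) = φ x) :
    ∃ L : ℝ, 0 ≤ L ∧ ∀ u v, |φ u - φ v| ≤ L * |u - v| := by
  have hper : Function.Periodic (deriv φ) 1 := fun x => by
    rw [← deriv_comp_add_const]
    congr 1
    exact funext hp
  obtain ⟨L, hL⟩ := (isCompact_Icc (a := (0 : ℝ)) (b := 1)).exists_bound_of_continuousOn
    (hφ.continuous_deriv le_rfl).continuousOn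
  have hL' : ∀ x, ‖deriv φ x‖ ≤ L := by
    intro x
    obtain ⟨y, hy, hxy⟩ := hper.exists_mem_Ico₀ one_pos x
    rw [hxy]
    exact hL y ⟨hy.1, hy.2.le⟩
  refine ⟨L, (norm_nonneg _).trans (hL' 0), fun u v => ?_⟩
  simpa using Convex.norm_image_sub_le_of_norm_deriv_le
    (fun x _ => (hφ.differentiable (by simp)).differentiableAt) (fun x _ => hL' x)
    convex_univ (mem_univ v) (mem_univ u)

/-- Along an inverse branch of `T^n` the distance of two orbits decays geometrically backwards in
time, so every `y` over `x` has a partner `y'` over `x'` whose Birkhoff sum is smaller by at most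
`D * dist x x'`, with `D` independent of `n`. -/
theorem exists_shadow (f : CrFun 1) (F : ExpMap 1) :
    ∃ D : NNReal, ∀ n x x' y, (cmap F.1)^[n] y = x → ∃ y', (cmap F.1)^[n] y' = x' ∧
      birkhoffSum (cmap F.1) f.1 n y ≤ birkhoffSum (cmap F.1) f.1 n y' + D * dist x x' := by
  obtain ⟨f, hf⟩ := f
  obtain ⟨F, hF, ⟨d, hd⟩, C, hC, l, hl, hexp⟩ := F
  simp only
  have hdiff : ∀ n, Differentiable ℝ F^[n] := fun n =>
    (hF.differentiable (by simp)).iterate n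
  have hinj : Function.Injective F := lift_injective (hdiff 1) (by positivity) (hexp 1 le_rfl)
  have hsurj := lift_surjective hd hF.continuous hinj
  obtain ⟨L, hL0, hL⟩ := exists_lipschitz_lift (φ := fun x : ℝ => f ↑x) hf fun x => by
    simp
  have hl0 : 0 < l := by linarith
  have hr1 : l⁻¹ < 1 := inv_lt_one_of_one_lt₀ hl
  have hr0 : 0 ≤ l⁻¹ := by positivity
  set S : ℝ := ∑' j : ℕ, (l⁻¹) ^ j with hS
  have hS0 : 0 ≤ S := tsum_nonneg fun j => by positivity
  refine ⟨⟨L * C⁻¹ * S, by positivity⟩, fun n x x' y hy => ?_⟩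
  obtain ⟨t, rfl⟩ := QuotientAddGroup.mk_surjective y
  obtain ⟨s, hs⟩ := QuotientAddGroup.mk_surjective (x' - x)
  change ((s : ℝ) : Circle1) = x' - x at hs
  change (cmap F)^[n] ((t : ℝ) : Circle1) = x at hy
  rw [cmap_iterate_coe hd] at hy
  -- `u` is the shortest real displacement from `x` to `x'`; `t'` is the lift of the partner point
  set u : ℝ := s - round s with hu
  obtain ⟨t', ht'⟩ := (hsurj.iterate n) (F^[n] t + u)
  have hus : ((u : ℝ) : Circle1) = x' - x := by
    rw [← hs]
    exact circle_coe_eq_iff.2 ⟨-round s, by rw [hu]; push_cast; ring⟩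
  have hun : |u| = dist x x' := by
    rw [dist_comm, dist_eq_norm, ← hs, UnitAddCircle.norm_eq]
  refine ⟨(t' : Circle1), ?_, ?_⟩
  · rw [cmap_iterate_coe hd, ht', AddCircle.coe_add, hy, hus]; abel
  · have hterm : ∀ k ∈ Finset.range n,
        f ((cmap F)^[k] (t : Circle1)) ≤ f ((cmap F)^[k] (t' : Circle1)) +
          L * C⁻¹ * (l⁻¹) ^ (n - 1 - k) * dist x x' := by
      intro k hk
      have hk' : k < n := Finset.mem_range.1 hk
      rw [cmap_iterate_coe hd, cmap_iterate_coe hd]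
      have h1 := mul_abs_sub_le (hdiff (n - k)) (hexp (n - k) (by omega)) (F^[k] t) (F^[k] t')
      rw [← Function.iterate_add_apply, ← Function.iterate_add_apply,
        Nat.sub_add_cancel hk'.le, ht', sub_add_cancel_left, abs_neg, hun] at h1
      have h2 := hL (F^[k] t) (F^[k] t')
      have h3 : |F^[k] t - F^[k] t'| ≤ C⁻¹ * (l⁻¹) ^ (n - 1 - k) * dist x x' := by
        have hpow : l ^ (n - 1 - k) ≤ l ^ (n - k) :=
          pow_le_pow_right₀ hl.le (by omega)
        have h4 : C * l ^ (n - 1 - k) * |F^[k] t - F^[k] t'| ≤ dist x x' :=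
          le_trans (by gcongr) h1
        rw [inv_pow, ← mul_inv, inv_mul_eq_div, le_div_iff₀ (by positivity)]
        linarith
      have h5 := mul_le_mul_of_nonneg_left h3 hL0
      have h6 := (abs_le.1 h2).2
      linarith
    have hgeo : ∑ k ∈ Finset.range n, (l⁻¹) ^ (n - 1 - k) ≤ S := by
      rw [Finset.sum_range_reflect (fun j => (l⁻¹) ^ j) n]
      exact (summable_geometric_of_lt_one hr0 hr1).sum_le_tsum _ fun j _ => by positivity
    calc birkhoffSum (cmap F) f n (t : Circle1)
        ≤ ∑ k ∈ Finset.range n, (f ((cmap F)^[k] (t' : Circle1)) +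
          L * C⁻¹ * (l⁻¹) ^ (n - 1 - k) * dist x x') := Finset.sum_le_sum hterm
      _ = birkhoffSum (cmap F) f n (t' : Circle1) +
          L * C⁻¹ * (∑ k ∈ Finset.range n, (l⁻¹) ^ (n - 1 - k)) * dist x x' := by
        rw [Finset.sum_add_distrib, birkhoffSum, Finset.mul_sum, Finset.sum_mul]
      _ ≤ _ := by
        show _ ≤ _ + L * C⁻¹ * S * dist x x'
        gcongr

theorem cmap_facts (F : ExpMap 1) : Continuous (cmap F.1) ∧ Function.Surjective (cmap F.1) ∧
    ∀ x, (cmap F.1 ⁻¹' {x}).Finite := by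
  obtain ⟨F, hF, ⟨d, hd⟩, C, hC, l, hl, hexp⟩ := F
  simp only
  have hinj : Function.Injective F :=
    lift_injective (hF.differentiable (by simp)) (by positivity) (hexp 1 le_rfl)
  refine ⟨continuous_cmap hd hF.continuous, fun x => ?_, cmap_fiber_finite hF.continuous hinj⟩
  obtain ⟨t, ht⟩ := lift_surjective hd hF.continuous hinj (rep x)
  exact ⟨(t : Circle1), by rw [cmap_coe hd, ht, coe_rep]⟩

/-! ### Maximizing measures -/

theorem birkhoffSum_of_coboundary {X : Type*} {T : X → X} {f g : X → ℝ} {c : ℝ} {x : X} {n : ℕ}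
    (h : ∀ k < n, g (T^[k] x) + f (T^[k] x) = g (T^[k + 1] x) + c) :
    birkhoffSum T f n x = n * c + g (T^[n] x) - g x := by
  induction n with
  | zero => simp [birkhoffSum_zero]
  | succ n ih =>
    rw [birkhoffSum_succ, ih fun k hk => h k (by omega)]
    have := h n (by omega)
    push_cast
    linarith

theorem tendsto_average_of_bounded {s : ℕ → ℝ} {c R : ℝ} (h : ∀ n : ℕ, |s n - (n + 1) * c| ≤ R) :
    Tendsto (fun n : ℕ => ((n : ℝ) + 1)⁻¹ * s n) atTop (𝓝 c) := by
  have h0 : Tendsto (fun n : ℕ => ((n : ℝ) + 1)⁻¹ * R) atTop (𝓝 0) := by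
    simpa using (tendsto_one_div_add_atTop_nhds_zero_nat (𝕜 := ℝ)).mul_const R
  refine tendsto_iff_norm_sub_tendsto_zero.2
    (squeeze_zero (fun _ => norm_nonneg _) (fun n => ?_) h0)
  have hp : (0 : ℝ) < (n : ℝ) + 1 := by positivity
  have : ((n : ℝ) + 1)⁻¹ * s n - c = ((n : ℝ) + 1)⁻¹ * (s n - (n + 1) * c) := by
    field_simp
  rw [this, norm_mul, Real.norm_of_nonneg (by positivity)]
  gcongr
  exact h n

theorem continuous_crFun (f : CrFun 1) : Continuous f.1 :=
  (QuotientAddGroup.isQuotientMap_mk (N := AddSubgroup.zmultiples (1 : ℝ))).continuous_iff.2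
    f.2.continuous

theorem integrable_circle {μ : Measure Circle1} [IsFiniteMeasure μ] {φ : Circle1 → ℝ}
    (hφ : Continuous φ) : Integrable φ μ :=
  hφ.integrable_of_hasCompactSupport (HasCompactSupport.of_compactSpace φ)

theorem integral_comp_eq {T : Circle1 → Circle1} (hT : Continuous T) {μ : Measure Circle1}
    (hμ : InvProb T μ) {φ : Circle1 → ℝ} (hφ : Continuous φ) : ∫ x, φ (T x) ∂μ = ∫ x, φ x ∂μ := by
  conv_rhs => rw [← hμ.2]
  rw [integral_map hT.aemeasurable hφ.aestronglyMeasurable]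

/-- The sub-action of `exists_calibrated` has constant `c = β(f,T)`: integrating the sub-action
inequality gives `β ≤ c`, and the empirical measures on backward orbits along which it is an
equality produce an invariant measure with integral `c`. -/
theorem Gset_nonempty (f : CrFun 1) (F : ExpMap 1) : (Gset f.1 (cmap F.1)).Nonempty := by
  obtain ⟨hT, hs, hfin⟩ := cmap_facts F
  have hf := continuous_crFun f
  obtain ⟨D, hD⟩ := exists_shadow f F
  obtain ⟨c, g, hLip, hsub, hcal⟩ := exists_calibrated hs hfin hf 0 hD
  have hg := hLip.continuous
  set T := cmap F.1 with hTdef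
  obtain ⟨R, hR⟩ := isCompact_univ.exists_bound_of_continuousOn hg.continuousOn
  have hchain : ∀ n : ℕ, ∃ z, birkhoffSum T f.1 n z = n * c + g (T^[n] z) - g z := by
    -- `b` picks a calibrating preimage, so `b^[n] 0` starts a calibrated segment ending at `0`
    choose b hb1 hb2 using hcal
    have hit : ∀ (n k : ℕ), k ≤ n → T^[k] (b^[n] 0) = b^[n - k] 0 := by
      intro n k hk
      obtain ⟨j, rfl⟩ := Nat.exists_eq_add_of_le hk
      rw [Function.iterate_add_apply, Function.LeftInverse.iterate hb1 k, Nat.add_sub_cancel_left]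
    intro n
    refine ⟨b^[n] 0, birkhoffSum_of_coboundary fun k hk => ?_⟩
    rw [hit n k hk.le, hit n (k + 1) hk, show n - k = n - (k + 1) + 1 by omega,
      Function.iterate_succ_apply', hb2]
  choose z hz using hchain
  obtain ⟨μ, hμ1, hμ2, hμ3⟩ := exists_invariant_of_average hT hf
    (z := fun n => z (n + 1)) (c := c) <| by
    refine tendsto_average_of_bounded (R := R + R) fun n => ?_
    rw [hz]
    push_cast
    rw [add_sub_assoc, add_sub_cancel_left]
    exact (norm_sub_le _ _).trans (add_le_add (hR _ (mem_univ _)) (hR _ (mem_univ _)))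
  have hle : ∀ ν, InvProb T ν → ∫ x, f.1 x ∂ν ≤ c := by
    intro ν hν
    have := hν.1
    have h1 : ∫ x, (g x + f.1 x) ∂ν ≤ ∫ x, (g (T x) + c) ∂ν :=
      integral_mono (integrable_circle (hg.add hf))
        (integrable_circle ((hg.comp hT).add continuous_const)) hsub
    have hgT : Integrable (fun x => g (T x)) ν := integrable_circle (hg.comp hT)
    rw [integral_add (integrable_circle hg) (integrable_circle hf),
      integral_add hgT (integrable_const c),
      integral_comp_eq hT hν hg] at h1
    simp at h1
    linarith
  have hbeta : beta f.1 T = c := by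
    refine IsGreatest.csSup_eq ⟨⟨μ, ⟨hμ1, hμ2⟩, hμ3⟩, ?_⟩
    rintro _ ⟨ν, hν, rfl⟩
    exact hle ν hν
  refine ⟨g, ⟨D, hLip⟩, ⟨hg, ?_⟩, ?_⟩
  · rw [hbeta]; exact hsub
  · rw [hbeta]; exact hcal

/-- Birkhoff averages converge to `β(f,T)` at every point of `K(f,T)`, so the claim follows by
dominated convergence. `K(f,T)` need not be known to be measurable: the set of convergence is
measurable and contains it. -/
theorem integral_eq_beta_of_Kset {f : Circle1 → ℝ} (hf : Continuous f) {T : Circle1 → Circle1}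
    (hT : Continuous T) {μ : Measure Circle1} (hμ : InvProb T μ) (hK : μ (Kset f T) = 1) :
    ∫ x, f x ∂μ = beta f T := by
  have := hμ.1
  set A : ℕ → Circle1 → ℝ := fun n x => ((n : ℝ) + 1)⁻¹ * birkhoffSum T f (n + 1) x with hA
  have hsumc : ∀ n, Continuous (birkhoffSum T f n) := fun n =>
    continuous_finsetSum _ fun k _ => hf.comp (hT.iterate k)
  have hAc : ∀ n, Continuous (A n) := fun n => continuous_const.mul (hsumc _)
  have hsub : Kset f T ⊆ {x | Tendsto (fun n => A n x) atTop (𝓝 (beta f T))} := by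
    intro x hx
    simp only [Kset, mem_iUnion] at hx
    obtain ⟨g, ⟨-, ⟨hg, -⟩, -⟩, hx⟩ := hx
    obtain ⟨w, hw, hwx⟩ := mem_iInter.1 hx 0
    obtain rfl : w = x := hwx
    obtain ⟨R, hR⟩ := isCompact_univ.exists_bound_of_continuousOn hg.continuousOn
    refine tendsto_average_of_bounded (R := R + R) fun n => ?_
    rw [birkhoffSum_of_coboundary (g := g) (c := beta f T) fun k _ => ?_]
    · push_cast
      rw [add_sub_assoc, add_sub_cancel_left]
      exact (norm_sub_le _ _).trans (add_le_add (hR _ (mem_univ _)) (hR _ (mem_univ _)))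
    · rw [Function.iterate_succ_apply']
      exact hw k
  have hmeas : MeasurableSet {x | Tendsto (fun n => A n x) atTop (𝓝 (beta f T))} :=
    measurableSet_tendsto _ fun n => (hAc n).measurable
  have hae : ∀ᵐ x ∂μ, Tendsto (fun n => A n x) atTop (𝓝 (beta f T)) :=
    (mem_ae_iff_prob_eq_one hmeas).2 (le_antisymm prob_le_one (hK ▸ measure_mono hsub))
  have hAint : ∀ n, ∫ x, A n x ∂μ = ∫ x, f x ∂μ := by
    intro n
    have hk : ∀ k, ∫ x, f (T^[k] x) ∂μ = ∫ x, f x ∂μ := by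
      intro k
      induction k with
      | zero => rfl
      | succ k ih =>
        simp only [Function.iterate_succ_apply]
        rw [integral_comp_eq hT hμ (φ := fun x => f (T^[k] x)) (hf.comp (hT.iterate k)), ih]
    simp only [hA, birkhoffSum]
    have hkint : ∀ k ∈ Finset.range (n + 1), Integrable (fun x => f (T^[k] x)) μ := fun k _ =>
      integrable_circle (hf.comp (hT.iterate k))
    rw [integral_const_mul, integral_finsetSum _ hkint]
    simp only [hk, Finset.sum_const, Finset.card_range, nsmul_eq_mul]
    push_cast
    field_simp
  obtain ⟨B, hB⟩ := isCompact_univ.exists_bound_of_continuousOn hf.continuousOn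
  have hlim := tendsto_integral_of_dominated_convergence (μ := μ) (F := A)
    (f := fun _ => beta f T) (fun _ => B)
    (fun n => (hAc n).aestronglyMeasurable) (integrable_const B)
    (fun n => Eventually.of_forall fun x => by
      have hp : (0 : ℝ) < (n : ℝ) + 1 := by positivity
      rw [hA, norm_mul, Real.norm_of_nonneg (by positivity), inv_mul_le_iff₀ hp]
      calc ‖birkhoffSum T f (n + 1) x‖ ≤ ∑ k ∈ Finset.range (n + 1), B :=
            norm_sum_le_of_le _ fun k _ => hB _ (mem_univ _)
        _ = (n + 1) * B := by simp) hae
  simp only [hAint, integral_const, probReal_univ, one_smul] at hlim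
  exact tendsto_nhds_unique tendsto_const_nhds hlim

/-- For a maximizing `μ` and a sub-action `g`, the nonnegative function `g ∘ T + β - g - f` has
zero integral, so `μ` is carried by `E_{f,T,g}`, and by invariance by `Λ_{f,T,g}`. -/
theorem measure_Kset_of_maximizing (f : CrFun 1) (F : ExpMap 1) {μ : Measure Circle1}
    (hμ : IsMaximizing f.1 (cmap F.1) μ) : μ (Kset f.1 (cmap F.1)) = 1 := by
  obtain ⟨hT, -, -⟩ := cmap_facts F
  have hf := continuous_crFun f
  obtain ⟨g, hG⟩ := Gset_nonempty f F
  obtain ⟨-, ⟨hg, hsub⟩, -⟩ := id hG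
  set T := cmap F.1
  have := hμ.1.1
  have hmp : MeasurePreserving T μ μ := ⟨hT.measurable, hμ.1.2⟩
  have hE : ∀ᵐ x ∂μ, x ∈ Eset f.1 T g := by
    have h0 : 0 ≤ fun x => (g (T x) + beta f.1 T) - (g x + f.1 x) := fun x =>
      sub_nonneg.2 (hsub x)
    have hint : ∫ x, ((g (T x) + beta f.1 T) - (g x + f.1 x)) ∂μ = 0 := by
      have hgT : Integrable (fun x => g (T x)) μ := integrable_circle (hg.comp hT)
      have h1 : Integrable (fun x => g (T x) + beta f.1 T) μ := hgT.add (integrable_const _)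
      have h2 : Integrable (fun x => g x + f.1 x) μ := integrable_circle (hg.add hf)
      rw [integral_sub h1 h2, integral_add (integrable_circle hg) (integrable_circle hf),
        integral_add hgT (integrable_const _),
        integral_comp_eq hT hμ.1 hg, hμ.2]
      simp
    have := (integral_eq_zero_iff_of_nonneg h0 (integrable_circle
      (((hg.comp hT).add continuous_const).sub (hg.add hf)))).1 hint
    filter_upwards [this] with x hx
    exact (sub_eq_zero.1 hx).symm
  have hstar : ∀ᵐ x ∂μ, x ∈ LambdaStar f.1 T g :=
    ae_all_iff.2 fun n => (hmp.iterate n).quasiMeasurePreserving.ae hE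
  have hEc : IsClosed (Eset f.1 T g) :=
    isClosed_eq (hg.add hf) ((hg.comp hT).add continuous_const)
  have hsc : IsCompact (LambdaStar f.1 T g) := by
    have : LambdaStar f.1 T g = ⋂ n : ℕ, T^[n] ⁻¹' Eset f.1 T g := by
      ext x; simp [LambdaStar]
    rw [this]
    exact (isClosed_iInter fun n => hEc.preimage (hT.iterate n)).isCompact
  have hL : ∀ᵐ x ∂μ, x ∈ Lambda f.1 T g := by
    simp only [Lambda, mem_iInter]
    refine ae_all_iff.2 fun n => ?_
    have hm : MeasurableSet (T^[n] '' LambdaStar f.1 T g) :=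
      (hsc.image (hT.iterate n)).measurableSet
    have hmap : ∀ᵐ x ∂(μ.map T^[n]), x ∈ T^[n] '' LambdaStar f.1 T g := by
      refine (ae_map_iff (p := fun x => x ∈ T^[n] '' LambdaStar f.1 T g)
        (hT.iterate n).aemeasurable hm).2 ?_
      filter_upwards [hstar] with x hx
      exact ⟨x, hx, rfl⟩
    rwa [(hmp.iterate n).map_eq] at hmap
  have hKae : Kset f.1 T ∈ ae μ := by
    filter_upwards [hL] with x hx
    exact mem_biUnion hG hx
  exact (measure_congr (eventuallyEq_univ.2 hKae)).trans measure_univ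

/-- Proposition 2.1(iv): the invariant probability measures of `T|K(f,T)` are exactly the
maximizing measures of `(f,T)`. -/
theorem measures_on_K_eq_maximizing (f : CrFun 1) (F : ExpMap 1) :
    {μ : Measure Circle1 | InvProb (cmap F.1) μ ∧ μ (Kset f.1 (cmap F.1)) = 1} =
      {μ : Measure Circle1 | IsMaximizing f.1 (cmap F.1) μ} := by
  ext μ
  exact ⟨fun h => ⟨h.1, integral_eq_beta_of_Kset (continuous_crFun f) (cmap_facts F).1 h.1 h.2⟩,
    fun h => ⟨h.1, measure_Kset_of_maximizing f F h⟩⟩
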